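/- Let h be a complex number with exp(h) ≠ 1 and let [x] = (exp(hx/2) − exp(−hx/2))/(exp(h/2) − exp(−h/2)) for x ∈ ℂ. Let k ≥ 1 be an integer and let complex numbers L_{i,2k−1} (i ∈ [1−k, k−1]), L_{i,2k} (i ∈ [−k, k−1]), L_{i,2k+1} (i ∈ [−k, k]) and L_{i,2k+2} (i ∈ [−k−1, k]) be given such that [L_{i,2k} − L_{j,2k} + t] ≠ 0 for all i ≠ j in [−k, k−1] and t ∈ {−1, 0, 1}, and [L_{i,2k+1} − L_{l,2k+1} + t] ≠ 0 for all i ≠ l in [−k, k] and t ∈ {−1, 0, 1}. Then ∑_{s=0}^{1} ∑_{j=−k}^{k−1} ∑_{l=−k}^{k} (−1)^s · ( ∏_{i≠l, i=−k}^{k} [L_{i,2k+1} − L_{j,2k} − s + 1] · ∏_{i=1−k}^{k−1} [L_{i,2k−1} − L_{j,2k} − s + 1] ) / ( ∏_{i≠j, i=−k}^{k−1} [L_{i,2k} − L_{j,2k} − s][L_{i,2k} − L_{j,2k} − s + 1] ) · ( ∏_{i=−k−1}^{k} [L_{i,2k+2} − L_{l,2k+1} − s] · ∏_{i≠j, i=−k}^{k−1}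 [L_{i,2k} − L_{l,2k+1} − s] ) / ( ∏_{i≠l, i=−k}^{k} [L_{i,2k+1} − L_{l,2k+1} − s][L_{i,2k+1} − L_{l,2k+1} − s + 1] ) = [ ∑_{j=−k−1}^{k} L_{j,2k+2} − ∑_{j=−k}^{k} L_{j,2k+1} − ∑_{j=−k}^{k−1} L_{j,2k} + ∑_{j=−k+1}^{k−1} L_{j,2k−1} − 1 ]. (Identity (23b).) -/

import Mathlib

/-- The q-bracket `[x] = (exp(hx/2) - exp(-hx/2))/(exp(h/2) - exp(-h/2))`. -/
noncomputable def qbr (h x : ℂ) : ℂ :=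
  (Complex.exp (h * x / 2) - Complex.exp (-(h * x) / 2)) /
    (Complex.exp (h / 2) - Complex.exp (-h / 2))

/-!
Write `q = exp (h / 2)`. Since `[y - x]` is a constant multiple of `q ^ (-x - y) (q ^ 2x - q ^ 2y)`,
reading off the leading coefficient of a polynomial interpolated at the points `q ^ 2xⱼ` evaluates
the residue sums `∑ⱼ q ^ xⱼ Rⱼ` and `∑ⱼ Rⱼ`, where `Rⱼ = ∏ᵢ [Yᵢ - xⱼ] / ∏_{i ≠ j} [xᵢ - xⱼ]`.

Two such sums, with `∑ⱼ Rⱼ` equal to `[V]` and `[W]`, are coupled by the addition formula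
`[a + b] = q ^ b [a] + q ^ (-a) [b]`. Applied to `a = V`, `b = W`, it splits `[V + W]` into products
of residue sums. Applied to `a = Y - x`, `b = Z - y`, it collects the coefficients of each pair of
nodes `(x, y)` into the single bracket `[Y - x + Z - y]`, where `Y` and `Z` are numerator parameters
that each residue may choose according to the other node. For the nodes `x = C j + s`,
`y = D l + s'` with `s, s' ∈ {0, 1}` and the choices `Y = D l + 1`, `Z = C j`, this bracket is
`[1 - s - s']`: the mixed pairs `s ≠ s'` drop out and the others carry the sign `(-1) ^ s`.
-/

open Finset

lemma erase_inl_disjSum {α β : Type*} [DecidableEq α] [DecidableEq β] (s : Finset α) (t : Finset β)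
    (a : α) : (s.disjSum t).erase (Sum.inl a) = (s.erase a).disjSum t := by
  ext (i | i) <;> simp

lemma erase_inr_disjSum {α β : Type*} [DecidableEq α] [DecidableEq β] (s : Finset α) (t : Finset β)
    (b : β) : (s.disjSum t).erase (Sum.inr b) = s.disjSum (t.erase b) := by
  ext (i | i) <;> simp

section qexp

/-- The power `q ^ x` of `q = exp (h / 2)`, for a complex exponent `x`. -/
noncomputable def qexp (h x : ℂ) : ℂ := Complex.exp (h * x / 2)

variable (h x y : ℂ)

lemma qexp_ne_zero : qexp h x ≠ 0 := Complex.exp_ne_zero _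

lemma qexp_add : qexp h (x + y) = qexp h x * qexp h y := by
  simp only [qexp, mul_add, add_div, Complex.exp_add]

lemma qexp_neg : qexp h (-x) = (qexp h x)⁻¹ := by
  simp only [qexp, mul_neg, neg_div, Complex.exp_neg]

lemma qexp_sub : qexp h (x - y) = qexp h x / qexp h y := by
  rw [sub_eq_add_neg, qexp_add, qexp_neg, div_eq_mul_inv]

lemma qexp_neg_left : qexp (-h) x = qexp h (-x) := by
  simp only [qexp, neg_mul, mul_neg]

lemma qexp_sum {ι : Type*} (s : Finset ι) (f : ι → ℂ) :
    qexp h (∑ i ∈ s, f i) = ∏ i ∈ s, qexp h (f i) := by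
  simp only [qexp, mul_sum, sum_div, Complex.exp_sum]

lemma qbr_eq_qexp : qbr h x = (qexp h x - qexp h (-x)) / (qexp h 1 - qexp h (-1)) := by
  simp only [qbr, qexp, mul_neg, mul_one]

lemma qbr_zero : qbr h 0 = 0 := by
  rw [qbr_eq_qexp, neg_zero, sub_self, zero_div]

lemma qbr_neg : qbr h (-x) = -qbr h x := by
  rw [qbr_eq_qexp, qbr_eq_qexp, neg_neg, ← neg_div, neg_sub]

lemma qbr_neg_left : qbr (-h) x = qbr h x := by
  simp only [qbr_eq_qexp, qexp_neg_left]
  rw [← neg_sub, ← neg_sub (qexp h (- -1)), neg_div_neg_eq, neg_neg, neg_neg]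

variable {h} in
lemma qbr_one (hh : Complex.exp h ≠ 1) : qbr h 1 = 1 := by
  rw [qbr_eq_qexp]
  refine div_self fun hq ↦ hh ?_
  calc Complex.exp h = qexp h (1 - -1) := by rw [qexp]; congr 1; ring
    _ = 1 := by rw [qexp_sub, sub_eq_zero.mp hq, div_self (qexp_ne_zero h _)]

lemma qbr_sub : qbr h (y - x) =
    -(qexp h x)⁻¹ / (qexp h 1 - qexp h (-1)) * (qexp h y)⁻¹ * (qexp h x ^ 2 - qexp h y ^ 2) := by
  have hx := qexp_ne_zero h x
  have hy := qexp_ne_zero h y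
  rw [qbr_eq_qexp, neg_sub, qexp_sub, qexp_sub, div_mul_eq_mul_div, div_mul_eq_mul_div]
  congr 1
  field_simp
  ring

lemma qexp_mul_qbr_add : qexp h y * qbr h x + qexp h (-x) * qbr h y = qbr h (x + y) := by
  simp only [qbr_eq_qexp, neg_add, qexp_add]
  ring

end qexp

section Residues

lemma sum_prod_sub_div_prod_sub {F ι κ : Type*} [Field F] [DecidableEq ι] {s : Finset ι}
    {t : Finset κ} {u : ι → F} (hu : Set.InjOn u s) (v : κ → F) (hst : #t + 1 = #s) :
    ∑ j ∈ s, (∏ i ∈ t, (u j - v i)) / ∏ i ∈ s.erase j, (u j - u i) = 1 := by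
  have hdeg : (#s : WithBot ℕ) = (∏ i ∈ t, (Polynomial.X - Polynomial.C (v i))).degree + 1 := by
    simp [Polynomial.degree_prod, ← hst]
  have hlead := Lagrange.leadingCoeff_eq_sum hu hdeg
  rw [(Polynomial.monic_prod_X_sub_C v t).leadingCoeff] at hlead
  simpa [Polynomial.eval_prod] using hlead.symm

variable {ι κ : Type*} {h : ℂ} {s : Finset ι} {x : ι → ℂ} {t : Finset κ}

lemma prod_qbr_sub (t : Finset κ) (Y : κ → ℂ) (z : ℂ) :
    ∏ i ∈ t, qbr h (Y i - z) =
      (-(qexp h z)⁻¹ / (qexp h 1 - qexp h (-1))) ^ #t * (qexp h (∑ i ∈ t, Y i))⁻¹ *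
        ∏ i ∈ t, (qexp h z ^ 2 - qexp h (Y i) ^ 2) := by
  simp only [qbr_sub, prod_mul_distrib, prod_const, prod_inv_distrib, qexp_sum]

lemma injOn_qexp_sq (hx : (s : Set ι).Pairwise fun i j ↦ qbr h (x i - x j) ≠ 0) :
    Set.InjOn (fun i ↦ qexp h (x i) ^ 2) s := by
  intro i hi j hj hij
  by_contra hne
  exact hx hi hj hne (by rw [qbr_sub, sub_eq_zero.mpr hij.symm, mul_zero])

/-- `∏_{i ∈ t} [Y i - x j] / ∏_{i ∈ s, i ≠ j} [x i - x j]`, which is up to a constant the residue at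
the node `z = x j` of `∏_{i ∈ t} [Y i - z] / ∏_{i ∈ s} [x i - z]`. -/
noncomputable def qResidue [DecidableEq ι] (h : ℂ) (s : Finset ι) (x : ι → ℂ)
    (t : Finset κ) (Y : κ → ℂ) (j : ι) : ℂ :=
  (∏ i ∈ t, qbr h (Y i - x j)) / ∏ i ∈ s.erase j, qbr h (x i - x j)

variable [DecidableEq ι]

lemma qResidue_neg_left (Y : κ → ℂ) (j : ι) : qResidue (-h) s x t Y j = qResidue h s x t Y j := by
  simp only [qResidue, qbr_neg_left]

lemma qbr_mul_qResidue_erase [DecidableEq κ] {a : κ} (ha : a ∈ t) (Y : κ → ℂ) (j : ι) :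
    qbr h (Y a - x j) * qResidue h s x (t.erase a) Y j = qResidue h s x t Y j := by
  rw [qResidue, qResidue, ← mul_div_assoc, mul_prod_erase t (fun i ↦ qbr h (Y i - x j)) ha]

lemma qexp_mul_qResidue (hx : (s : Set ι).Pairwise fun i j ↦ qbr h (x i - x j) ≠ 0)
    (Y : κ → ℂ) (hst : #t + 1 = #s) {j : ι} (hj : j ∈ s) :
    qexp h (x j) * qResidue h s x t Y j =
      qexp h (∑ i ∈ s, x i - ∑ i ∈ t, Y i) *
        ((∏ i ∈ t, (qexp h (x j) ^ 2 - qexp h (Y i) ^ 2)) /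
          ∏ i ∈ s.erase j, (qexp h (x j) ^ 2 - qexp h (x i) ^ 2)) := by
  have hden : ∏ i ∈ s.erase j, qbr h (x i - x j) ≠ 0 :=
    prod_ne_zero_iff.mpr fun i hi ↦ hx (mem_of_mem_erase hi) hj (ne_of_mem_erase hi)
  have hcard : #(s.erase j) = #t := by rw [card_erase_of_mem hj, ← hst, Nat.add_sub_cancel]
  rw [prod_qbr_sub, hcard] at hden
  have hpow := left_ne_zero_of_mul (left_ne_zero_of_mul hden)
  rw [qResidue, prod_qbr_sub, prod_qbr_sub, hcard, ← add_sum_erase s x hj, qexp_sub, qexp_add,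
    mul_assoc, mul_assoc, mul_div_mul_left _ _ hpow]
  field_simp

lemma sum_qexp_mul_qResidue (hx : (s : Set ι).Pairwise fun i j ↦ qbr h (x i - x j) ≠ 0)
    (Y : κ → ℂ) (hst : #t + 1 = #s) :
    ∑ j ∈ s, qexp h (x j) * qResidue h s x t Y j = qexp h (∑ i ∈ s, x i - ∑ i ∈ t, Y i) := by
  rw [sum_congr rfl fun j hj ↦ qexp_mul_qResidue hx Y hst hj, ← mul_sum,
    sum_prod_sub_div_prod_sub (injOn_qexp_sq hx) _ hst, mul_one]

lemma sum_qexp_sub_mul_qResidue_erase [DecidableEq κ]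
    (hx : (s : Set ι).Pairwise fun i j ↦ qbr h (x i - x j) ≠ 0) (Y : κ → ℂ) (hst : #t = #s) {a : κ}
    (ha : a ∈ t) :
    ∑ j ∈ s, qexp h (x j - Y a) * qResidue h s x (t.erase a) Y j =
      qexp h (∑ i ∈ s, x i - ∑ i ∈ t, Y i) := by
  have hcard : #(t.erase a) + 1 = #s := by rw [card_erase_add_one ha, hst]
  simp only [qexp_sub, div_mul_eq_mul_div, ← sum_div]
  rw [sum_qexp_mul_qResidue hx Y hcard, ← qexp_sub, ← qexp_sub, ← add_sum_erase t Y ha]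
  congr 1
  ring

lemma sum_qexp_sub_mul_qResidue_erase' [DecidableEq κ]
    (hx : (s : Set ι).Pairwise fun i j ↦ qbr h (x i - x j) ≠ 0) (Y : κ → ℂ) (hst : #t = #s) {a : κ}
    (ha : a ∈ t) :
    ∑ j ∈ s, qexp h (Y a - x j) * qResidue h s x (t.erase a) Y j =
      qexp h (∑ i ∈ t, Y i - ∑ i ∈ s, x i) := by
  have hneg := sum_qexp_sub_mul_qResidue_erase (h := -h) (by simpa only [qbr_neg_left] using hx) Y
    hst ha
  simpa only [qexp_neg_left, qResidue_neg_left, neg_sub] using hneg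

lemma sum_qResidue (hx : (s : Set ι).Pairwise fun i j ↦ qbr h (x i - x j) ≠ 0) (Y : κ → ℂ)
    (hst : #t = #s) :
    ∑ j ∈ s, qResidue h s x t Y j = qbr h (∑ i ∈ t, Y i - ∑ i ∈ s, x i) := by
  classical
  obtain rfl | ⟨a, ha⟩ := t.eq_empty_or_nonempty
  · obtain rfl : s = ∅ := by rwa [card_empty, eq_comm, card_eq_zero] at hst
    simp only [sum_empty, sub_self, qbr_zero]
  rw [qbr_eq_qexp, neg_sub, ← sum_qexp_sub_mul_qResidue_erase' hx Y hst ha,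
    ← sum_qexp_sub_mul_qResidue_erase hx Y hst ha, ← sum_sub_distrib, sum_div]
  refine sum_congr rfl fun j _ ↦ ?_
  rw [← qbr_mul_qResidue_erase ha, qbr_eq_qexp, neg_sub]
  ring

theorem sum_sum_qbr_mul_qResidue_mul_qResidue {ι' κ' : Type*} [DecidableEq ι'] [DecidableEq κ]
    [DecidableEq κ'] {s' : Finset ι'} {t' : Finset κ'} {y : ι' → ℂ}
    (hx : (s : Set ι).Pairwise fun i j ↦ qbr h (x i - x j) ≠ 0)
    (hy : (s' : Set ι').Pairwise fun i j ↦ qbr h (y i - y j) ≠ 0)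
    (Y : κ → ℂ) (Z : κ' → ℂ) (hst : #t = #s) (hst' : #t' = #s') {σ : ι' → κ} {τ : ι → κ'}
    (hσ : ∀ r ∈ s', σ r ∈ t) (hτ : ∀ p ∈ s, τ p ∈ t') :
    ∑ p ∈ s, ∑ r ∈ s', qbr h (Y (σ r) - x p + (Z (τ p) - y r)) *
        (qResidue h s x (t.erase (σ r)) Y p * qResidue h s' y (t'.erase (τ p)) Z r) =
      qbr h (∑ i ∈ t, Y i - ∑ i ∈ s, x i + (∑ i ∈ t', Z i - ∑ i ∈ s', y i)) := by
  have hfst : qexp h (∑ i ∈ t', Z i - ∑ i ∈ s', y i) * qbr h (∑ i ∈ t, Y i - ∑ i ∈ s, x i) =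
      ∑ p ∈ s, ∑ r ∈ s', qexp h (Z (τ p) - y r) * qbr h (Y (σ r) - x p) *
        (qResidue h s x (t.erase (σ r)) Y p * qResidue h s' y (t'.erase (τ p)) Z r) := by
    rw [← sum_qResidue hx Y hst, mul_sum]
    refine sum_congr rfl fun p hp ↦ ?_
    rw [← sum_qexp_sub_mul_qResidue_erase' hy Z hst' (hτ p hp), sum_mul]
    refine sum_congr rfl fun r hr ↦ ?_
    rw [← qbr_mul_qResidue_erase (hσ r hr)]
    ring
  have hsnd : qexp h (∑ i ∈ s, x i - ∑ i ∈ t, Y i) * qbr h (∑ i ∈ t', Z i - ∑ i ∈ s', y i) =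
      ∑ p ∈ s, ∑ r ∈ s', qexp h (x p - Y (σ r)) * qbr h (Z (τ p) - y r) *
        (qResidue h s x (t.erase (σ r)) Y p * qResidue h s' y (t'.erase (τ p)) Z r) := by
    rw [← sum_qResidue hy Z hst', mul_sum, sum_comm]
    refine sum_congr rfl fun r hr ↦ ?_
    rw [← sum_qexp_sub_mul_qResidue_erase hx Y hst (hσ r hr), sum_mul]
    refine sum_congr rfl fun p hp ↦ ?_
    rw [← qbr_mul_qResidue_erase (hτ p hp)]
    ring
  rw [← qexp_mul_qbr_add, neg_sub, hfst, hsnd]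
  simp only [← sum_add_distrib, ← add_mul, ← qexp_mul_qbr_add, neg_sub]

end Residues

section ShiftedNodes

/-- The node `C j + s` indexed by the pair `(j, s)`. For `s ∈ {0, 1}` the factors of
`∏_{i ≠ j} [C i - C j - s] [C i - C j - s + 1]` are brackets of differences of these nodes. -/
noncomputable def shiftedNode {ι : Type*} (C : ι → ℂ) (p : ι × ℕ) : ℂ := C p.1 + p.2

variable {ι κ : Type*} {h : ℂ}

lemma qbr_one_sub_sub (hh : Complex.exp h ≠ 1) {s s' : ℕ} (hs : s ∈ range 2) (hs' : s' ∈ range 2) :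
    qbr h (1 - s - s') = if s = s' then (-1) ^ s else 0 := by
  rw [mem_range] at hs hs'
  interval_cases s <;> interval_cases s' <;> simp [qbr_zero, qbr_one hh, qbr_neg]

lemma sum_sum_qbr_one_sub_sub_mul (hh : Complex.exp h ≠ 1) (J : Finset ι) (K : Finset κ)
    (F : ι × ℕ → κ × ℕ → ℂ) :
    ∑ p ∈ J ×ˢ range 2, ∑ r ∈ K ×ˢ range 2, qbr h (1 - p.2 - r.2) * F p r =
      ∑ s ∈ range 2, ∑ j ∈ J, ∑ l ∈ K, (-1) ^ s * F (j, s) (l, s) := by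
  rw [sum_product_right]
  refine sum_congr rfl fun s hs ↦ sum_congr rfl fun j _ ↦ ?_
  rw [sum_product]
  refine sum_congr rfl fun l _ ↦ ?_
  calc ∑ s' ∈ range 2, qbr h (1 - s - s') * F (j, s) (l, s')
      = ∑ s' ∈ range 2, if s = s' then (-1) ^ s * F (j, s) (l, s') else 0 :=
        sum_congr rfl fun s' hs' ↦ by rw [qbr_one_sub_sub hh hs hs', ite_mul, zero_mul]
    _ = (-1) ^ s * F (j, s) (l, s) := by rw [sum_ite_eq, if_pos hs]

lemma pairwise_shiftedNode (hh : Complex.exp h ≠ 1) {J : Finset ι} {C : ι → ℂ}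
    (hC : ∀ i ∈ J, ∀ j ∈ J, i ≠ j →
      ∀ t ∈ ({-1, 0, 1} : Finset ℤ), qbr h (C i - C j + (t : ℂ)) ≠ 0) :
    ((J ×ˢ range 2 : Finset (ι × ℕ)) : Set (ι × ℕ)).Pairwise fun p p' ↦
      qbr h (shiftedNode C p - shiftedNode C p') ≠ 0 := by
  rintro ⟨i, s⟩ hp ⟨j, s'⟩ hp' hne
  obtain ⟨hi, hs⟩ := mem_product.mp hp
  obtain ⟨hj, hs'⟩ := mem_product.mp hp'
  rw [mem_range] at hs hs'
  have hsub : shiftedNode C (i, s) - shiftedNode C (j, s') = C i - C j + ((s - s' : ℤ) : ℂ) := by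
    simp only [shiftedNode]
    push_cast
    ring
  rw [hsub]
  obtain rfl | hij := eq_or_ne i j
  · interval_cases s <;> interval_cases s' <;> simp_all [qbr_one hh, qbr_neg]
  · refine hC i hi j hj hij _ ?_
    interval_cases s <;> interval_cases s' <;> decide

lemma sum_shiftedNode (J : Finset ι) (C : ι → ℂ) :
    ∑ p ∈ J ×ˢ range 2, shiftedNode C p = 2 * ∑ i ∈ J, C i + #J := by
  rw [sum_product_right, sum_range_succ, sum_range_one]
  simp only [shiftedNode, sum_add_distrib, sum_const, nsmul_eq_mul, Nat.cast_zero, Nat.cast_one]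
  ring

lemma prod_erase_qbr_shiftedNode [DecidableEq ι] (hh : Complex.exp h ≠ 1) (J : Finset ι)
    (C : ι → ℂ) {j : ι} (hj : j ∈ J) {s : ℕ} (hs : s ∈ range 2) :
    ∏ p ∈ (J ×ˢ range 2).erase (j, s), qbr h (shiftedNode C p - shiftedNode C (j, s)) =
      (-1) ^ s * ∏ i ∈ J.erase j, qbr h (C i - C j - s) * qbr h (C i - C j - s + 1) := by
  have hs2 : s < 2 := mem_range.mp hs
  have herase : (J ×ˢ range 2).erase (j, s) = insert (j, 1 - s) (J.erase j ×ˢ range 2) := by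
    ext ⟨i, s'⟩
    simp only [mem_erase, mem_product, mem_insert, mem_range, Prod.mk.injEq, ne_eq]
    grind
  have hdiag : shiftedNode C (j, 1 - s) - shiftedNode C (j, s) = 1 - s - s := by
    simp only [shiftedNode, Nat.cast_sub (Nat.le_of_lt_succ hs2), Nat.cast_one]
    ring
  rw [herase, prod_insert (by simp), hdiag, qbr_one_sub_sub hh hs hs, if_pos rfl, prod_product]
  congr 1
  refine prod_congr rfl fun i _ ↦ ?_
  simp only [prod_range_succ, prod_range_zero, one_mul, shiftedNode, Nat.cast_zero, Nat.cast_one]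
  congr 2 <;> ring

lemma qResidue_shiftedNode [DecidableEq ι] (hh : Complex.exp h ≠ 1) (J : Finset ι) (C : ι → ℂ)
    (t : Finset κ) (Y : κ → ℂ) {j : ι} (hj : j ∈ J) {s : ℕ} (hs : s ∈ range 2) :
    qResidue h (J ×ˢ range 2) (shiftedNode C) t Y (j, s) =
      (-1) ^ s * ((∏ i ∈ t, qbr h (Y i - C j - s)) /
        ∏ i ∈ J.erase j, qbr h (C i - C j - s) * qbr h (C i - C j - s + 1)) := by
  have hsign : ((-1 : ℂ) ^ s)⁻¹ = (-1) ^ s := by rw [← inv_pow, inv_neg_one]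
  rw [qResidue, prod_erase_qbr_shiftedNode hh J C hj hs, div_mul_eq_div_div_swap, div_eq_mul_inv,
    hsign, mul_comm]
  simp only [shiftedNode, sub_sub]

end ShiftedNodes

theorem identity_23b_general {ι κ π ρ : Type*} [DecidableEq ι] [DecidableEq κ] (h : ℂ)
    (hh : Complex.exp h ≠ 1) {J : Finset ι} {K : Finset κ} {P : Finset π} {Q : Finset ρ}
    (hK : #K = #J + 1) (hP : #P + 1 = #J) (hQ : #Q = #J + 2)
    (B : π → ℂ) (C : ι → ℂ) (D : κ → ℂ) (E : ρ → ℂ)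
    (hC : ∀ i ∈ J, ∀ j ∈ J, i ≠ j →
      ∀ t ∈ ({-1, 0, 1} : Finset ℤ), qbr h (C i - C j + (t : ℂ)) ≠ 0)
    (hD : ∀ i ∈ K, ∀ l ∈ K, i ≠ l →
      ∀ t ∈ ({-1, 0, 1} : Finset ℤ), qbr h (D i - D l + (t : ℂ)) ≠ 0) :
    ∑ s ∈ range 2, ∑ j ∈ J, ∑ l ∈ K,
      (-1 : ℂ) ^ s *
      (((∏ i ∈ K.erase l, qbr h (D i - C j - (s : ℂ) + 1)) *
          ∏ i ∈ P, qbr h (B i - C j - (s : ℂ) + 1)) /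
        ∏ i ∈ J.erase j, qbr h (C i - C j - (s : ℂ)) * qbr h (C i - C j - (s : ℂ) + 1)) *
      (((∏ i ∈ Q, qbr h (E i - D l - (s : ℂ))) *
          ∏ i ∈ J.erase j, qbr h (C i - D l - (s : ℂ))) /
        ∏ i ∈ K.erase l, qbr h (D i - D l - (s : ℂ)) * qbr h (D i - D l - (s : ℂ) + 1))
    = qbr h ((∑ j ∈ Q, E j) - (∑ j ∈ K, D j) - (∑ j ∈ J, C j) + (∑ j ∈ P, B j) - 1) := by
  classical
  have hcoupled := sum_sum_qbr_mul_qResidue_mul_qResidue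
    (t := K.disjSum P) (t' := Q.disjSum J)
    (pairwise_shiftedNode hh hC) (pairwise_shiftedNode hh hD)
    (Sum.elim (fun l ↦ D l + 1) fun i ↦ B i + 1) (Sum.elim E C)
    (by simp only [card_disjSum, card_product, card_range]; omega)
    (by simp only [card_disjSum, card_product, card_range]; omega)
    (σ := fun r ↦ Sum.inl r.1) (τ := fun p ↦ Sum.inr p.1)
    (fun r hr ↦ inl_mem_disjSum.mpr (mem_product.mp hr).1)
    (fun p hp ↦ inr_mem_disjSum.mpr (mem_product.mp hp).1)
  have hcoef (p : ι × ℕ) (r : κ × ℕ) :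
      D r.1 + 1 - shiftedNode C p + (C p.1 - shiftedNode D r) = 1 - p.2 - r.2 := by
    simp only [shiftedNode]
    ring
  have htotal : ∑ l ∈ K, D l + #K + (∑ i ∈ P, B i + #P) - (2 * ∑ j ∈ J, C j + #J) +
      (∑ i ∈ Q, E i + ∑ j ∈ J, C j - (2 * ∑ l ∈ K, D l + #K)) =
        ∑ i ∈ Q, E i - ∑ l ∈ K, D l - ∑ j ∈ J, C j + ∑ i ∈ P, B i - 1 := by
    rw [← hP]
    push_cast
    ring
  simp only [Sum.elim_inl, Sum.elim_inr, hcoef, sum_sum_qbr_one_sub_sub_mul hh, sum_disjSum,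
    sum_add_distrib, sum_const, nsmul_eq_mul, mul_one, sum_shiftedNode, htotal] at hcoupled
  rw [← hcoupled]
  refine sum_congr rfl fun s hs ↦ sum_congr rfl fun j hj ↦ sum_congr rfl fun l hl ↦ ?_
  rw [qResidue_shiftedNode hh J C _ _ hj hs, qResidue_shiftedNode hh K D _ _ hl hs]
  simp only [erase_inl_disjSum, erase_inr_disjSum, prod_disjSum, Sum.elim_inl, Sum.elim_inr,
    add_sub_right_comm]
  rw [mul_mul_mul_comm, ← mul_pow, neg_one_mul, neg_neg, one_pow, one_mul, mul_assoc]

/-- Identity (23b).  `B i` stands for `L_{i,2k-1}`, `C i` for `L_{i,2k}`,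
`D i` for `L_{i,2k+1}` and `E i` for `L_{i,2k+2}`. -/
theorem identity_23b (h : ℂ) (hh : Complex.exp h ≠ 1) (k : ℤ) (hk : 1 ≤ k)
    (B C D E : ℤ → ℂ)
    (hC : ∀ i ∈ Finset.Icc (-k) (k - 1), ∀ j ∈ Finset.Icc (-k) (k - 1), i ≠ j →
      ∀ t ∈ ({-1, 0, 1} : Finset ℤ), qbr h (C i - C j + (t : ℂ)) ≠ 0)
    (hD : ∀ i ∈ Finset.Icc (-k) k, ∀ l ∈ Finset.Icc (-k) k, i ≠ l →
      ∀ t ∈ ({-1, 0, 1} : Finset ℤ), qbr h (D i - D l + (t : ℂ)) ≠ 0) :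
    ∑ s ∈ Finset.range 2, ∑ j ∈ Finset.Icc (-k) (k - 1), ∑ l ∈ Finset.Icc (-k) k,
      (-1 : ℂ) ^ s *
      (((∏ i ∈ (Finset.Icc (-k) k).erase l, qbr h (D i - C j - (s : ℂ) + 1)) *
          ∏ i ∈ Finset.Icc (1 - k) (k - 1), qbr h (B i - C j - (s : ℂ) + 1)) /
        ∏ i ∈ (Finset.Icc (-k) (k - 1)).erase j,
          qbr h (C i - C j - (s : ℂ)) * qbr h (C i - C j - (s : ℂ) + 1)) *
      (((∏ i ∈ Finset.Icc (-k - 1) k, qbr h (E i - D l - (s : ℂ))) *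
          ∏ i ∈ (Finset.Icc (-k) (k - 1)).erase j, qbr h (C i - D l - (s : ℂ))) /
        ∏ i ∈ (Finset.Icc (-k) k).erase l,
          qbr h (D i - D l - (s : ℂ)) * qbr h (D i - D l - (s : ℂ) + 1))
    = qbr h ((∑ j ∈ Finset.Icc (-k - 1) k, E j)
        - (∑ j ∈ Finset.Icc (-k) k, D j)
        - (∑ j ∈ Finset.Icc (-k) (k - 1), C j)
        + (∑ j ∈ Finset.Icc (-k + 1) (k - 1), B j) - 1) := by
  rw [show -k + 1 = 1 - k by ring]
  exact identity_23b_general h hh (by simp only [Int.card_Icc]; omega)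
    (by simp only [Int.card_Icc]; omega) (by simp only [Int.card_Icc]; omega) B C D E hC hD
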